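/- arXiv:1306.1368 — 3 statements merged into one kernel-verified Lean document; each statement's English description precedes it below -/
import Mathlib

section
/- Let p be a prime and let d₁, d₂ be integers with 2 ≤ d₁ < d₂. Let h₁ ∈ GL_{d₁}(𝔽_p) and h₂ ∈ GL_{d₂}(𝔽_p), and let h₁ ⊗ h₂ ∈ GL_{d₁d₂}(𝔽_p) denote their Kronecker (tensor) product. If 4 · orderOf(h₁ ⊗ h₂) ≥ p^{d₁d₂ − 1}, then (d₁, d₂) = (2, 3) and p ∈ {2, 3}. Moreover, there exist h₁ ∈ GL₂(𝔽₂) and h₂ ∈ GL₃(𝔽₂) with 4 · orderOf(h₁ ⊗ h₂) ≥ 2⁶, while for all h₁ ∈ GL₂(𝔽₃) and h₂ ∈ GL₃(𝔽₃) one has 4 · orderOf(h₁ ⊗ h₂) < 3⁶. -/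
open Matrix

open Polynomial in
theorem klo_vec {p d : ℕ} [Fact p.Prime] (M : Matrix (Fin d) (Fin d) (ZMod p)) (i : ℕ) :
    ∃ v : Fin d → ZMod p, M ^ i = ∑ k, v k • M ^ (k : ℕ) := by
  by_cases hd : d = 0
  · subst hd
    exact ⟨fun _ => 0, Subsingleton.elim _ _⟩
  refine ⟨fun k => ((X ^ i : (ZMod p)[X]) %ₘ M.charpoly).coeff k, ?_⟩
  have hdeg : ((X ^ i : (ZMod p)[X]) %ₘ M.charpoly).natDegree < d := by
    have := Polynomial.natDegree_modByMonic_lt (X ^ i : (ZMod p)[X]) M.charpoly_monic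
      (by
        intro h
        have h1 := M.charpoly_natDegree_eq_dim
        rw [h] at h1
        simp at h1
        exact hd h1.symm)
    simpa [M.charpoly_natDegree_eq_dim] using this
  rw [Matrix.pow_eq_aeval_mod_charpoly, Polynomial.aeval_eq_sum_range' hdeg, Finset.sum_range]

theorem klo_scalar {p d : ℕ} [Fact p.Prime] (hd : 0 < d) (g : GL (Fin d) (ZMod p)) :
    ∃ a : ℕ, 0 < a ∧ a * (p - 1) ≤ p ^ d - 1 ∧ ∃ c : (ZMod p)ˣ,
      (g : Matrix (Fin d) (Fin d) (ZMod p)) ^ a = (c : ZMod p) • 1 := by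
  classical
  have : Nonempty (Fin d) := ⟨⟨0, hd⟩⟩
  set M : Matrix (Fin d) (Fin d) (ZMod p) := g.val with hM
  have hex : ∃ a : ℕ, 0 < a ∧ ∃ c : (ZMod p)ˣ, M ^ a = (c : ZMod p) • 1 := by
    refine ⟨orderOf g, orderOf_pos g, 1, ?_⟩
    rw [hM, ← Units.val_pow_eq_pow_val, pow_orderOf_eq_one]
    simp
  have hmin := fun m (h : m < Nat.find hex) => Nat.find_min hex h
  obtain ⟨ha, hc⟩ := Nat.find_spec hex
  generalize Nat.find hex = a at hmin ha hc
  refine ⟨a, ha, ?_, hc⟩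
  choose v hv using klo_vec M
  have hval : ∀ (i : ℕ) (c : (ZMod p)ˣ),
      ∑ k, ((c : ZMod p) • v i) k • M ^ (k : ℕ) = (c : ZMod p) • M ^ i := by
    intro i c
    rw [hv i, Finset.smul_sum]
    simp [smul_smul]
  have hunit : ∀ i, M ^ i = ((g ^ i : GL (Fin d) (ZMod p)) : Matrix _ _ (ZMod p)) := by
    intro i; simp [hM]
  have key : ∀ (i j : ℕ) (c c' : (ZMod p)ˣ), i < j → j < a →
      (c : ZMod p) • M ^ i = (c' : ZMod p) • M ^ j → False := by
    intro i j c c' hij hja h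
    apply hmin (j - i) (by omega)
    refine ⟨by omega, c'⁻¹ * c, ?_⟩
    have h2 : M ^ i * M ^ (j - i) = M ^ i * (((c'⁻¹ * c : (ZMod p)ˣ) : ZMod p) • 1) := by
      rw [← pow_add, show i + (j - i) = j by omega, Matrix.mul_smul, mul_one, Units.val_mul,
        mul_smul, h, smul_smul, Units.inv_mul, one_smul]
    rw [hunit i] at h2
    exact (g ^ i).isUnit.mul_left_cancel h2
  let f : Fin a × (ZMod p)ˣ → {w : Fin d → ZMod p // w ≠ 0} := fun x =>
    ⟨(x.2 : ZMod p) • v x.1, by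
      intro h
      have := hval x.1 x.2
      rw [h] at this
      simp at this
      rw [hunit] at this
      rcases smul_eq_zero.1 this.symm with h' | h'
      · exact x.2.ne_zero h'
      · exact (g ^ (x.1 : ℕ)).ne_zero h'⟩
  have hf : Function.Injective f := by
    rintro ⟨i, c⟩ ⟨j, c'⟩ h
    have h1 : (c : ZMod p) • v i = (c' : ZMod p) • v j := congrArg Subtype.val h
    have h2 : (c : ZMod p) • M ^ (i : ℕ) = (c' : ZMod p) • M ^ (j : ℕ) := by
      rw [← hval, ← hval, h1]
    rcases lt_trichotomy (i : ℕ) j with hij | hij | hij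
    · exact (key _ _ _ _ hij j.2 h2).elim
    · have hij' : i = j := Fin.ext hij
      subst hij'
      have h3 : (c : ZMod p) • (1 : Matrix (Fin d) (Fin d) (ZMod p)) = (c' : ZMod p) • 1 := by
        have : M ^ (i : ℕ) * ((c : ZMod p) • 1) = M ^ (i : ℕ) * ((c' : ZMod p) • 1) := by
          simpa using h2
        rw [hunit] at this
        exact (g ^ (i : ℕ)).isUnit.mul_left_cancel this
      have h4 := congrFun (congrFun h3 ⟨0, hd⟩) ⟨0, hd⟩
      simp at h4
      have h5 : c = c' := by exact_mod_cast h4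
      rw [h5]
    · exact (key _ _ _ _ hij i.2 h2.symm).elim
  have hcard := Fintype.card_le_of_injective f hf
  have h6 : Fintype.card {w : Fin d → ZMod p // w ≠ 0} = p ^ d - 1 := by
    rw [Fintype.card_subtype_compl]
    simp [ZMod.card]
  rw [h6] at hcard
  simpa [Nat.totient_prime (Fact.out : p.Prime)] using hcard

theorem klo_pow {R : Type*} [CommRing R] {m n : ℕ} (A : Matrix (Fin m) (Fin m) R)
    (B : Matrix (Fin n) (Fin n) R) (k : ℕ) :
    (Matrix.kroneckerMap (· * ·) A B) ^ k = Matrix.kroneckerMap (· * ·) (A ^ k) (B ^ k) := by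
  induction k with
  | zero => simp
  | succ k ih => rw [pow_succ, pow_succ, pow_succ, ih, Matrix.mul_kronecker_mul]

theorem klo_bound {p d₁ d₂ : ℕ} [hp : Fact p.Prime] (hd₁ : 0 < d₁) (hd₂ : 0 < d₂)
    (h₁ : GL (Fin d₁) (ZMod p)) (h₂ : GL (Fin d₂) (ZMod p)) :
    orderOf (Matrix.kroneckerMap (· * ·)
      (h₁ : Matrix (Fin d₁) (Fin d₁) (ZMod p))
      (h₂ : Matrix (Fin d₂) (Fin d₂) (ZMod p))) * (p - 1) ≤ (p ^ d₁ - 1) * (p ^ d₂ - 1) := by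
  obtain ⟨a, ha, hap, c, hc⟩ := klo_scalar hd₁ h₁
  obtain ⟨b, hb, hbp, c', hc'⟩ := klo_scalar hd₂ h₂
  have h2 := hp.out.two_le
  have hpos : 0 < a * b * (p - 1) := by
    have : 0 < p - 1 := by omega
    positivity
  have hu : ∀ (x : (ZMod p)ˣ) (n : ℕ), (x : ZMod p) ^ (n * (p - 1)) = 1 := by
    intro x n
    rw [mul_comm, pow_mul, ← Units.val_pow_eq_pow_val, ZMod.units_pow_card_sub_one_eq_one]
    simp
  have h := orderOf_le_of_pow_eq_one (x := Matrix.kroneckerMap (· * ·)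
      (h₁ : Matrix (Fin d₁) (Fin d₁) (ZMod p))
      (h₂ : Matrix (Fin d₂) (Fin d₂) (ZMod p))) hpos (by
    rw [klo_pow]
    have e1 : (h₁ : Matrix (Fin d₁) (Fin d₁) (ZMod p)) ^ (a * b * (p - 1)) = 1 := by
      rw [mul_assoc, pow_mul, hc, smul_pow, one_pow, hu, one_smul]
    have e2 : (h₂ : Matrix (Fin d₂) (Fin d₂) (ZMod p)) ^ (a * b * (p - 1)) = 1 := by
      rw [mul_comm a b, mul_assoc, pow_mul, hc', smul_pow, one_pow, hu, one_smul]
    rw [e1, e2]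
    simp)
  calc _ ≤ a * b * (p - 1) * (p - 1) := Nat.mul_le_mul_right _ h
    _ = (a * (p - 1)) * (b * (p - 1)) := by ring
    _ ≤ _ := Nat.mul_le_mul hap hbp

open Polynomial in
theorem klo_gl2 (g : GL (Fin 2) (ZMod 2)) :
    (g : Matrix (Fin 2) (Fin 2) (ZMod 2)) ^ 2 = 1 ∨
    (g : Matrix (Fin 2) (Fin 2) (ZMod 2)) ^ 3 = 1 := by
  have h : ∀ M : Matrix (Fin 2) (Fin 2) (ZMod 2), M.det ≠ 0 → M ^ 2 = 1 ∨ M ^ 3 = 1 := by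
    decide +revert
  apply h
  exact (Matrix.isUnits_det_units g).ne_zero

open Polynomial in
theorem klo_gl4 (g : GL (Fin 4) (ZMod 2)) :
    (g : Matrix (Fin 4) (Fin 4) (ZMod 2)) ^ 15 = 1 ∨
    (g : Matrix (Fin 4) (Fin 4) (ZMod 2)) ^ 7 = 1 ∨
    (g : Matrix (Fin 4) (Fin 4) (ZMod 2)) ^ 6 = 1 ∨
    (g : Matrix (Fin 4) (Fin 4) (ZMod 2)) ^ 4 = 1 := by
  have hdet : (g : Matrix (Fin 4) (Fin 4) (ZMod 2)).det ≠ 0 :=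
    (Matrix.isUnits_det_units g).ne_zero
  generalize (g : Matrix (Fin 4) (Fin 4) (ZMod 2)) = M at hdet ⊢
  have h0 : M.charpoly.coeff 0 = 1 := by
    have h := Matrix.det_eq_sign_charpoly_coeff M
    have h' : M.charpoly.coeff 0 ≠ 0 := by
      intro h2; rw [h2] at h; simp at h; exact hdet h
    revert h'
    generalize M.charpoly.coeff 0 = x
    revert x; decide
  have hdeg : M.charpoly.natDegree = 4 := by simp [M.charpoly_natDegree_eq_dim]
  have h4 : M.charpoly.coeff 4 = 1 := by
    have := M.charpoly_monic
    rw [Polynomial.Monic, Polynomial.leadingCoeff, hdeg] at this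
    exact this
  have hsum := M.charpoly.as_sum_range_C_mul_X_pow
  rw [hdeg] at hsum
  simp only [Finset.sum_range_succ, Finset.sum_range_zero, h0, h4] at hsum
  have hCH := M.aeval_self_charpoly
  have fin : ∀ (k : ℕ) (q : (ZMod 2)[X]), (X ^ k : (ZMod 2)[X]) - 1 = M.charpoly * q →
      M ^ k = 1 := by
    intro k q h
    have := congrArg (aeval M) h
    rw [map_mul, hCH, zero_mul, map_sub, map_pow, aeval_X, map_one, sub_eq_zero] at this
    exact this
  have two : (2 : (ZMod 2)[X]) = 0 := by
    have : ((2 : ℕ) : (ZMod 2)[X]) = 0 := CharP.cast_eq_zero _ 2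
    exact_mod_cast this
  have b : ∀ x : ZMod 2, x = 0 ∨ x = 1 := by decide
  rcases b (M.charpoly.coeff 1) with h1 | h1 <;> rcases b (M.charpoly.coeff 2) with h2 | h2 <;>
    rcases b (M.charpoly.coeff 3) with h3 | h3 <;>
    simp only [h1, h2, h3, map_zero, map_one, zero_mul, one_mul, zero_add, add_zero, pow_zero,
      pow_one] at hsum
  · right; right; right
    refine fin 4 (1) ?_
    rw [hsum]
    linear_combination (-(1)) * two
  · left
    refine fin 15 (1 + X ^ 3 + X ^ 4 + X ^ 6 + X ^ 8 + X ^ 9 + X ^ 10 + X ^ 11) ?_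
    rw [hsum]
    linear_combination (-(1 + X ^ 3 + X ^ 4 + X ^ 6 + X ^ 7 + X ^ 8 + X ^ 9 + X ^ 10 + X ^ 11 + X ^ 12 + X ^ 13 + X ^ 14)) * two
  · right; right; left
    refine fin 6 (1 + X ^ 2) ?_
    rw [hsum]
    linear_combination (-(1 + X ^ 2 + X ^ 4)) * two
  · right; left
    refine fin 7 (1 + X ^ 2 + X ^ 3) ?_
    rw [hsum]
    linear_combination (-(1 + X ^ 2 + X ^ 3 + X ^ 4 + X ^ 5 + X ^ 6)) * two
  · left
    refine fin 15 (1 + X ^ 1 + X ^ 2 + X ^ 3 + X ^ 5 + X ^ 7 + X ^ 8 + X ^ 11) ?_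
    rw [hsum]
    linear_combination (-(1 + X ^ 1 + X ^ 2 + X ^ 3 + X ^ 4 + X ^ 5 + X ^ 6 + X ^ 7 + X ^ 8 + X ^ 9 + X ^ 11 + X ^ 12)) * two
  · right; right; left
    refine fin 6 (1 + X ^ 1 + X ^ 2) ?_
    rw [hsum]
    linear_combination (-(1 + X ^ 1 + X ^ 2 + X ^ 3 + X ^ 4 + X ^ 5)) * two
  · right; left
    refine fin 7 (1 + X ^ 1 + X ^ 3) ?_
    rw [hsum]
    linear_combination (-(1 + X ^ 1 + X ^ 2 + X ^ 3 + X ^ 4 + X ^ 5)) * two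
  · left
    refine fin 15 (1 + X ^ 1 + X ^ 5 + X ^ 6 + X ^ 10 + X ^ 11) ?_
    rw [hsum]
    linear_combination (-(1 + X ^ 1 + X ^ 2 + X ^ 3 + X ^ 4 + X ^ 5 + X ^ 6 + X ^ 7 + X ^ 8 + X ^ 9 + X ^ 10 + X ^ 11 + X ^ 12 + X ^ 13 + X ^ 14)) * two

theorem klo_24 (h₁ : GL (Fin 2) (ZMod 2)) (h₂ : GL (Fin 4) (ZMod 2)) :
    orderOf (Matrix.kroneckerMap (· * ·)
      (h₁ : Matrix (Fin 2) (Fin 2) (ZMod 2))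
      (h₂ : Matrix (Fin 4) (Fin 4) (ZMod 2))) ≤ 30 := by
  have key : ∀ (k a b : ℕ), 0 < k → k ≤ 30 → a ∣ k → b ∣ k →
      (h₁ : Matrix (Fin 2) (Fin 2) (ZMod 2)) ^ a = 1 →
      (h₂ : Matrix (Fin 4) (Fin 4) (ZMod 2)) ^ b = 1 →
      orderOf (Matrix.kroneckerMap (· * ·)
        (h₁ : Matrix (Fin 2) (Fin 2) (ZMod 2))
        (h₂ : Matrix (Fin 4) (Fin 4) (ZMod 2))) ≤ 30 := by
    rintro k a b hk hk' ⟨x, rfl⟩ ⟨y, hy⟩ h1 h2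
    refine (orderOf_le_of_pow_eq_one hk ?_).trans hk'
    rw [klo_pow, pow_mul, h1, hy, pow_mul, h2]
    simp
  rcases klo_gl2 h₁ with h | h <;> rcases klo_gl4 h₂ with h' | h' | h' | h'
  · exact key 30 _ _ (by norm_num) (by norm_num) (by norm_num) (by norm_num) h h'
  · exact key 14 _ _ (by norm_num) (by norm_num) (by norm_num) (by norm_num) h h'
  · exact key 6 _ _ (by norm_num) (by norm_num) (by norm_num) (by norm_num) h h'
  · exact key 4 _ _ (by norm_num) (by norm_num) (by norm_num) (by norm_num) h h'
  · exact key 15 _ _ (by norm_num) (by norm_num) (by norm_num) (by norm_num) h h'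
  · exact key 21 _ _ (by norm_num) (by norm_num) (by norm_num) (by norm_num) h h'
  · exact key 6 _ _ (by norm_num) (by norm_num) (by norm_num) (by norm_num) h h'
  · exact key 12 _ _ (by norm_num) (by norm_num) (by norm_num) (by norm_num) h h'

theorem klo_first (p d₁ d₂ : ℕ) (hp : p.Prime) (h2 : 2 ≤ d₁) (hlt : d₁ < d₂)
    (h₁ : GL (Fin d₁) (ZMod p)) (h₂ : GL (Fin d₂) (ZMod p))
    (h : p ^ (d₁ * d₂ - 1) ≤
            4 * orderOf (Matrix.kroneckerMap (· * ·)
              (h₁ : Matrix (Fin d₁) (Fin d₁) (ZMod p))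
              (h₂ : Matrix (Fin d₂) (Fin d₂) (ZMod p)))) :
    d₁ = 2 ∧ d₂ = 3 ∧ (p = 2 ∨ p = 3) := by
  have : Fact p.Prime := ⟨hp⟩
  have hp2 := hp.two_le
  have hb := klo_bound (by omega) (by omega) h₁ h₂
  have hk : p ^ (d₁ * d₂ - 1) * (p - 1) ≤ 4 * ((p ^ d₁ - 1) * (p ^ d₂ - 1)) := by
    calc _ ≤ _ := Nat.mul_le_mul_right (p - 1) h
      _ ≤ _ := by rw [mul_assoc]; exact Nat.mul_le_mul_left 4 hb
  have hsmall : d₁ * d₂ ≤ d₁ + d₂ + 2 := by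
    by_contra hcon
    push Not at hcon
    have e1 : p ^ (d₁ + d₂ + 2) ≤ p ^ (d₁ * d₂ - 1) :=
      Nat.pow_le_pow_right (by omega) (by omega)
    have e2 : p ^ (d₁ * d₂ - 1) ≤ p ^ (d₁ * d₂ - 1) * (p - 1) :=
      Nat.le_mul_of_pos_right _ (by omega)
    have q1 : 0 < p ^ d₁ := by positivity
    have q2 : 0 < p ^ d₂ := by positivity
    have e3 : (p ^ d₁ - 1) * (p ^ d₂ - 1) < p ^ d₁ * p ^ d₂ :=
      Nat.mul_lt_mul_of_lt_of_le (by omega) (by omega) (by omega)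
    have e4 : 4 * (p ^ d₁ * p ^ d₂) ≤ p ^ (d₁ + d₂ + 2) := by
      rw [pow_add, pow_add, mul_comm]
      exact Nat.mul_le_mul_left _ (by nlinarith)
    omega
  have hd1 : d₁ = 2 := by
    by_contra hne
    have : 3 ≤ d₁ := by omega
    nlinarith
  subst hd1
  have hd2 : d₂ = 3 ∨ d₂ = 4 := by omega
  obtain ⟨r, rfl⟩ : ∃ r, p = r + 1 := ⟨p - 1, by omega⟩
  have hr : 0 < r := by omega
  rcases hd2 with rfl | rfl
  · refine ⟨rfl, rfl, ?_⟩
    have hk' : (r + 1) ^ 5 ≤ 4 * ((r + 2) * ((r + 1) ^ 3 - 1)) := by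
      have e : (r + 1) ^ 2 - 1 = r * (r + 2) := by
        have : (r + 1) ^ 2 = r * (r + 2) + 1 := by ring
        omega
      rw [e] at hk
      simp only [Nat.add_sub_cancel] at hk
      refine Nat.le_of_mul_le_mul_right (hk.trans_eq ?_) hr
      ring
    have hle : r + 1 < 5 := by
      by_contra hcon
      obtain ⟨s, rfl⟩ : ∃ s, r = s + 4 := ⟨r - 4, by omega⟩
      have : (s + 4 + 1) ^ 5 ≤ 4 * ((s + 4 + 2) * (s + 4 + 1) ^ 3 - (s + 4 + 2)) := by
        simpa [Nat.mul_sub] using hk'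
      have h3 : 4 * ((s + 4 + 2) * (s + 4 + 1) ^ 3) < (s + 4 + 1) ^ 5 + 4 * (s + 4 + 2) := by
        ring_nf
        nlinarith [Nat.zero_le s, Nat.zero_le (s ^ 2), Nat.zero_le (s ^ 3), Nat.zero_le (s ^ 4),
          Nat.zero_le (s ^ 5)]
      have h4 : (0:ℕ) < (s + 4 + 1) ^ 5 := by positivity
      omega
    have : r = 1 ∨ r = 2 ∨ r = 3 := by omega
    rcases this with rfl | rfl | rfl
    · simp
    · simp
    · norm_num at hp
  · exfalso
    have hk' : (r + 1) ^ 7 ≤ 4 * ((r + 2) * ((r + 1) ^ 4 - 1)) := by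
      have e : (r + 1) ^ 2 - 1 = r * (r + 2) := by
        have : (r + 1) ^ 2 = r * (r + 2) + 1 := by ring
        omega
      rw [e] at hk
      simp only [Nat.add_sub_cancel] at hk
      refine Nat.le_of_mul_le_mul_right (hk.trans_eq ?_) hr
      ring
    rcases (show r = 1 ∨ 2 ≤ r by omega) with rfl | hr2
    · have := klo_24 h₁ h₂
      norm_num at h
      have h' : 128 ≤ 4 * 30 := h.trans (Nat.mul_le_mul_left 4 this)
      omega
    · obtain ⟨s, rfl⟩ : ∃ s, r = s + 2 := ⟨r - 2, by omega⟩
      have h3 : 4 * ((s + 2 + 2) * ((s + 2 + 1) ^ 4 - 1)) ≤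
          4 * ((s + 2 + 2) * (s + 2 + 1) ^ 4) := by
        gcongr; omega
      have h4 : 4 * ((s + 2 + 2) * (s + 2 + 1) ^ 4) < (s + 2 + 1) ^ 7 := by
        have : 4 * (s + 4) < (s + 3) ^ 3 := by ring_nf; nlinarith [Nat.zero_le (s ^ 3)]
        calc _ = 4 * (s + 4) * (s + 3) ^ 4 := by ring
          _ < (s + 3) ^ 3 * (s + 3) ^ 4 := Nat.mul_lt_mul_of_pos_right this (by positivity)
          _ = _ := by ring
      omega

theorem klo_ex : ∃ (h₁ : GL (Fin 2) (ZMod 2)) (h₂ : GL (Fin 3) (ZMod 2)),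
      2 ^ 6 ≤ 4 * orderOf (Matrix.kroneckerMap (· * ·)
        (h₁ : Matrix (Fin 2) (Fin 2) (ZMod 2)) (h₂ : Matrix (Fin 3) (Fin 3) (ZMod 2))) := by
  let A : Matrix (Fin 2) (Fin 2) (ZMod 2) := !![0, 1; 1, 1]
  let B : Matrix (Fin 3) (Fin 3) (ZMod 2) := !![0, 0, 1; 1, 0, 1; 0, 1, 0]
  have hA : A ^ 3 = 1 := by decide
  have hB : B ^ 7 = 1 := by
    have e3 : B ^ 3 = B + 1 := by decide
    have e6 : (B + 1) * (B + 1) * B = 1 := by decide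
    calc B ^ 7 = B ^ 3 * B ^ 3 * B := by rw [← pow_add, ← pow_succ]
      _ = 1 := by rw [e3, e6]
  refine ⟨⟨A, A ^ 2, by rw [← pow_succ', hA], by rw [← pow_succ, hA]⟩,
    ⟨B, B ^ 6, by rw [← pow_succ', hB], by rw [← pow_succ, hB]⟩, ?_⟩
  show 2 ^ 6 ≤ 4 * orderOf (Matrix.kroneckerMap (· * ·) A B)
  have h21 : orderOf (Matrix.kroneckerMap (· * ·) A B) = 21 := by
    apply orderOf_eq_of_pow_and_pow_div_prime (by norm_num)
    · rw [klo_pow, show 21 = 3 * 7 by norm_num, pow_mul, hA, mul_comm 3 7, pow_mul, hB]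
      simp
    · intro q hq hq21
      have : q = 3 ∨ q = 7 := by
        have h3 : q ∣ 3 * 7 := hq21
        rcases (Nat.Prime.dvd_mul hq).1 h3 with h | h
        · exact Or.inl ((Nat.prime_dvd_prime_iff_eq hq (by norm_num)).1 h)
        · exact Or.inr ((Nat.prime_dvd_prime_iff_eq hq (by norm_num)).1 h)
      rcases this with rfl | rfl
      · rw [show 21 / 3 = 3 * 2 + 1 by norm_num, klo_pow, pow_succ A, pow_mul, hA,
          show 3 * 2 + 1 = 7 by norm_num, hB]
        intro h
        have := congrFun (congrFun h (0, 0)) (1, 0)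
        revert this
        simp [A]
      · rw [show 21 / 7 = 3 by norm_num, klo_pow, hA]
        have e3 : B ^ 3 = B + 1 := by decide
        rw [e3]
        intro h
        have := congrFun (congrFun h (0, 0)) (0, 2)
        revert this
        simp [B]
  rw [h21]; norm_num

theorem klo_third (h₁ : GL (Fin 2) (ZMod 3)) (h₂ : GL (Fin 3) (ZMod 3)) :
      4 * orderOf (Matrix.kroneckerMap (· * ·)
        (h₁ : Matrix (Fin 2) (Fin 2) (ZMod 3)) (h₂ : Matrix (Fin 3) (Fin 3) (ZMod 3)))
        < 3 ^ 6 := by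
  have := klo_bound (by norm_num) (by norm_num) h₁ h₂
  norm_num at this ⊢
  omega

/-- Lemma on `𝒞₄`-subgroups: For a prime `p` and `2 ≤ d₁ < d₂`, if the
Kronecker product `h₁ ⊗ h₂` of invertible matrices `h₁ ∈ GL_{d₁}(𝔽_p)`,
`h₂ ∈ GL_{d₂}(𝔽_p)` has order at least `p^{d₁d₂ - 1} / 4`, then `(d₁, d₂) = (2, 3)` and
`p ∈ {2, 3}`.  Moreover `GL₂(𝔽₂) ⊗ GL₃(𝔽₂)` contains an element of order at least
`2⁶ / 4`, while every element of `GL₂(𝔽₃) ⊗ GL₃(𝔽₃)` has order less than `3⁶ / 4`. -/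
theorem kronecker_large_order :
    (∀ (p d₁ d₂ : ℕ), p.Prime → 2 ≤ d₁ → d₁ < d₂ →
      ∀ (h₁ : GL (Fin d₁) (ZMod p)) (h₂ : GL (Fin d₂) (ZMod p)),
        p ^ (d₁ * d₂ - 1) ≤
            4 * orderOf (Matrix.kroneckerMap (· * ·)
              (h₁ : Matrix (Fin d₁) (Fin d₁) (ZMod p))
              (h₂ : Matrix (Fin d₂) (Fin d₂) (ZMod p))) →
        d₁ = 2 ∧ d₂ = 3 ∧ (p = 2 ∨ p = 3)) ∧
    (∃ (h₁ : GL (Fin 2) (ZMod 2)) (h₂ : GL (Fin 3) (ZMod 2)),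
      2 ^ 6 ≤ 4 * orderOf (Matrix.kroneckerMap (· * ·)
        (h₁ : Matrix (Fin 2) (Fin 2) (ZMod 2)) (h₂ : Matrix (Fin 3) (Fin 3) (ZMod 2)))) ∧
    (∀ (h₁ : GL (Fin 2) (ZMod 3)) (h₂ : GL (Fin 3) (ZMod 3)),
      4 * orderOf (Matrix.kroneckerMap (· * ·)
        (h₁ : Matrix (Fin 2) (Fin 2) (ZMod 3)) (h₂ : Matrix (Fin 3) (Fin 3) (ZMod 3)))
        < 3 ^ 6) := by
  exact ⟨klo_first, klo_ex, klo_third⟩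
end

section
/- Let p ∈ {2, 3}, let m ≥ 3 and t ≥ 2 be integers, and set d = m^t. Let W = 𝔽_p^m, let f : {1, …, t} → GL(W) be a family of linear automorphisms, and let σ be a permutation of {1, …, t}. Let g be the permutation of the set of functions x : {1, …, t} → W defined by (g x)(i) = f(i)(x(σ^{−1}(i))) (an arbitrary element of the wreath product GL_m(p) ≀ Sym(t) acting imprimitively on W^t). Then 4 · orderOf g < p^{d−1}; that is, GL_m(p) ≀ Sym(t) contains no element of order at least p^{d−1}/4. -/
theorem aux_exponent (m t : ℕ) (hm : 3 ≤ m) (ht : 2 ≤ t) : t * m + 3 ≤ m ^ t := by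
  induction t, ht using Nat.le_induction with
  | base => nlinarith
  | succ k hk ih =>
    rw [pow_succ]
    nlinarith [Nat.mul_le_mul_right m ih, Nat.zero_le (k * m), mul_le_mul hm hm (by norm_num) (by omega)]

/-- A linear permutation of an `n`-dimensional space over `𝔽_p` has order at most `p ^ n - 1`. -/
theorem aux_order (p : ℕ) [Fact p.Prime] {V : Type*} [AddCommGroup V] [Module (ZMod p) V]
    [Module.Finite (ZMod p) V] [Nontrivial V] (g : Equiv.Perm V) (G : Module.End (ZMod p) V)
    (h : ∀ x, G x = g x) : orderOf g < p ^ Module.finrank (ZMod p) V := by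
  classical
  set n := Module.finrank (ZMod p) V with hn
  have hpow : ∀ (k : ℕ) (x : V), (G ^ k) x = (g ^ k) x := by
    intro k
    induction k with
    | zero => intro x; simp
    | succ k ih => intro x; rw [pow_succ, pow_succ]; simp [ih, h]
  let c : ℕ → (Fin n → ZMod p) := fun k i =>
    ((Polynomial.X ^ k : Polynomial (ZMod p)) %ₘ G.charpoly).coeff i
  have hc : ∀ k, G ^ k = ∑ i : Fin n, c k i • G ^ (i : ℕ) := by
    intro k
    have hdeg : ((Polynomial.X ^ k : Polynomial (ZMod p)) %ₘ G.charpoly).natDegree < n := by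
      have h1 : G.charpoly.natDegree = n := G.charpoly_natDegree
      have h2 : 0 < n := Module.finrank_pos
      rw [← h1]
      apply Polynomial.natDegree_modByMonic_lt _ G.charpoly_monic
      intro h3
      rw [h3] at h1
      simp at h1
      omega
    rw [LinearMap.pow_eq_aeval_mod_charpoly, Polynomial.aeval_eq_sum_range' hdeg,
      Finset.sum_range]
  have hinj : Set.InjOn c (Finset.range (orderOf g)) := by
    intro a ha b hb hab
    have hG : G ^ a = G ^ b := by rw [hc a, hc b, hab]
    apply pow_injOn_Iio_orderOf (x := g) (by simpa using ha) (by simpa using hb)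
    ext x
    simp only [← hpow, hG]
  have hmaps : ∀ k ∈ Finset.range (orderOf g), c k ∈ Finset.univ.erase (0 : Fin n → ZMod p) := by
    intro k _
    simp only [Finset.mem_erase, Finset.mem_univ, and_true]
    intro h0
    have hG : G ^ k = 0 := by rw [hc k, h0]; simp
    obtain ⟨x, y, hxy⟩ := exists_pair_ne V
    apply hxy
    apply (g ^ k).injective
    rw [← hpow, ← hpow, hG]
    simp
  have hcard := Finset.card_le_card_of_injOn c hmaps hinj
  rw [Finset.card_range, Finset.card_erase_of_mem (Finset.mem_univ _), Finset.card_univ] at hcard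
  simp only [Fintype.card_fun, ZMod.card, Fintype.card_fin] at hcard
  have : 0 < p ^ n := pow_pos (Fact.out : p.Prime).pos n
  omega

/-- Lemma on `𝒞₇`-subgroups: Let `p ∈ {2, 3}`, `m ≥ 3`, `t ≥ 2`,
`d = m^t`.  Any element `g` of the wreath product `GL_m(p) ≀ Sym(t)` acting imprimitively
on `(𝔽_p^m)^t` — i.e. any permutation of functions `x : Fin t → 𝔽_p^m` of the form
`(g x) i = f i (x (σ⁻¹ i))` — satisfies `4 * orderOf g < p ^ (d - 1)`. -/
theorem wreath_tensor_no_large_order (p m t d : ℕ) (hp : p = 2 ∨ p = 3)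
    (hm : 3 ≤ m) (ht : 2 ≤ t) (hd : d = m ^ t)
    (f : Fin t → ((Fin m → ZMod p) ≃ₗ[ZMod p] (Fin m → ZMod p)))
    (σ : Equiv.Perm (Fin t))
    (g : Equiv.Perm (Fin t → (Fin m → ZMod p)))
    (hg : ∀ (x : Fin t → (Fin m → ZMod p)) (i : Fin t), g x i = f i (x (σ⁻¹ i))) :
    4 * orderOf g < p ^ (d - 1) := by
  haveI : Fact p.Prime := ⟨by rcases hp with rfl | rfl <;> norm_num⟩
  haveI : Nonempty (Fin t) := ⟨⟨0, by omega⟩⟩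
  haveI : Nonempty (Fin m) := ⟨⟨0, by omega⟩⟩
  let G : Module.End (ZMod p) (Fin t → (Fin m → ZMod p)) :=
    LinearMap.pi fun i => (f i).toLinearMap ∘ₗ LinearMap.proj (σ⁻¹ i)
  have hG : ∀ x, G x = g x := by
    intro x
    funext i
    rw [hg]
    rfl
  have h1 := aux_order p g G hG
  have h2 : Module.finrank (ZMod p) (Fin t → (Fin m → ZMod p)) = t * m := by
    simp [Module.finrank_pi_fintype]
  rw [h2] at h1
  have h3 := aux_exponent m t hm ht
  have h4 : t * m + 2 ≤ d - 1 := by omega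
  have hp2 : 2 ≤ p := by omega
  have h5 : p ^ (t * m + 2) ≤ p ^ (d - 1) := Nat.pow_le_pow_right (by omega) h4
  have h6 : p ^ (t * m) * 4 ≤ p ^ (t * m + 2) := by
    rw [pow_add]
    exact Nat.mul_le_mul_left _ (by nlinarith)
  omega
end

section
/- Let m ≥ 3 and r ≥ 1 be integers, set d = m·r, and let V = 𝔽₂^d with an internal direct sum decomposition V = V₁ ⊕ ⋯ ⊕ V_r into h-invariant subspaces each of dimension m, where h is a linear automorphism of V (so h is block diagonal h = h₁ ⊕ ⋯ ⊕ h_r with each hᵢ ∈ GL_m(𝔽₂)). If orderOf h ≥ 2^{d−3}, then 2(r − 5) ≤ π(m), where π(m) denotes the number of primes at most m. -/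
open Polynomial in
lemma bd_poly (p : (ZMod 2)[X]) : p ≠ 0 → ¬ X ∣ p →
    ∃ (a : ℕ) (D : Finset ℕ), (∀ n ∈ D, 2 ≤ n) ∧ a + ∑ n ∈ D, n ≤ p.natDegree ∧
      p ∣ X ^ (2 ^ a * D.lcm (fun n => 2 ^ n - 1)) - 1 := by
  induction p using UniqueFactorizationMonoid.induction_on_coprime with
  | h0 => intro h; exact absurd rfl h
  | h1 hx =>
    intro _ _
    exact ⟨0, ∅, by simp, by simp, hx.dvd⟩
  | hpr i hp =>
    rename_i f
    intro _ hX
    rcases Nat.eq_zero_or_pos i with rfl | hi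
    · exact ⟨0, ∅, by simp, by simp, by simp⟩
    have hirr := hp.irreducible
    have hXf : ¬ X ∣ f := fun h => hX (h.trans (dvd_pow_self f hi.ne'))
    have hdeg : 0 < f.natDegree := hirr.natDegree_pos
    have h1 : f ∣ X ^ (2 ^ f.natDegree - 1) - 1 := by
      have h2 : f ∣ X ^ (Nat.card (ZMod 2)) ^ f.natDegree - X :=
        (hirr.natDegree_dvd_iff_dvd_X_pow_card_pow_sub_X).1 dvd_rfl
      have h3 : (X : (ZMod 2)[X]) ^ (Nat.card (ZMod 2)) ^ f.natDegree - X
          = X * (X ^ (2 ^ f.natDegree - 1) - 1) := by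
        have : 2 ^ f.natDegree = (2 ^ f.natDegree - 1) + 1 :=
          (Nat.sub_add_cancel Nat.one_le_two_pow).symm
        rw [Nat.card_zmod]
        conv_lhs => rw [this]
        ring
      rw [h3] at h2
      rcases hp.dvd_or_dvd h2 with h | h
      · exact absurd ((hirr.associated_of_dvd irreducible_X h).symm.dvd) hXf
      · exact h
    have hle : i ≤ 2 ^ (i - 1) := by
      have := Nat.lt_two_pow_self (n := i - 1)
      omega
    refine ⟨i - 1, if f.natDegree = 1 then ∅ else {f.natDegree}, ?_, ?_, ?_⟩
    · intro n hn
      split_ifs at hn with h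
      · simp at hn
      · simp at hn; omega
    · rw [natDegree_pow]
      obtain ⟨j, rfl⟩ : ∃ j, i = j + 1 := ⟨i - 1, by omega⟩
      split_ifs with h
      · simp; nlinarith
      · simp; nlinarith
    · have h4 : (if f.natDegree = 1 then (∅ : Finset ℕ) else {f.natDegree}).lcm
          (fun n => 2 ^ n - 1) = 2 ^ f.natDegree - 1 := by
        split_ifs with h
        · simp [h]
        · simp
      rw [h4, mul_comm, pow_mul]
      have h5 : ((X : (ZMod 2)[X]) ^ (2 ^ f.natDegree - 1)) ^ 2 ^ (i - 1) - 1
          = (X ^ (2 ^ f.natDegree - 1) - 1) ^ 2 ^ (i - 1) := by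
        rw [sub_pow_char_pow, one_pow]
      rw [h5]
      exact (pow_dvd_pow f hle).trans (pow_dvd_pow_of_dvd h1 _)
  | hcp hxy ihx ihy =>
    rename_i x y
    intro h0 hX
    have hx0 := left_ne_zero_of_mul h0
    have hy0 := right_ne_zero_of_mul h0
    obtain ⟨a, D, hD, hs, hd⟩ := ihx hx0 (fun h => hX (h.mul_right _))
    obtain ⟨b, E, hE, ht, he⟩ := ihy hy0 (fun h => hX (h.mul_left _))
    refine ⟨a + b, D ∪ E, ?_, ?_, ?_⟩
    · intro n hn
      rcases Finset.mem_union.1 hn with h | h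
      · exact hD n h
      · exact hE n h
    · rw [natDegree_mul hx0 hy0]
      have := Finset.sum_union_inter (s₁ := D) (s₂ := E) (f := fun n => n)
      omega
    · refine (hxy.isCoprime).mul_dvd (hd.trans ?_) (he.trans ?_)
      · apply dvd_pow_sub_one_of_dvd
        exact mul_dvd_mul (pow_dvd_pow _ (by omega))
          (Finset.lcm_mono Finset.subset_union_left)
      · apply dvd_pow_sub_one_of_dvd
        exact mul_dvd_mul (pow_dvd_pow _ (by omega))
          (Finset.lcm_mono Finset.subset_union_right)

open Polynomial in
lemma bd_end {W : Type*} [AddCommGroup W] [Module (ZMod 2) W] [Module.Finite (ZMod 2) W]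
    (g : Module.End (ZMod 2) W) (hg : Function.Injective g) :
    ∃ (a : ℕ) (D : Finset ℕ), (∀ n ∈ D, 2 ≤ n) ∧
      a + ∑ n ∈ D, n ≤ Module.finrank (ZMod 2) W ∧
      g ^ (2 ^ a * D.lcm (fun n => 2 ^ n - 1)) = 1 := by
  have hint : IsIntegral (ZMod 2) g := Algebra.IsIntegral.isIntegral g
  have h0 : minpoly (ZMod 2) g ≠ 0 := minpoly.ne_zero hint
  have hX : ¬ X ∣ minpoly (ZMod 2) g := by
    rintro ⟨q, hq⟩
    have hq0 : q ≠ 0 := by rintro rfl; simp at hq; exact h0 hq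
    have h1 : g * aeval g q = 0 := by
      have := minpoly.aeval (ZMod 2) g
      rw [hq] at this
      simpa using this
    have h2 : aeval g q = 0 := by
      ext w
      apply hg
      have := LinearMap.congr_fun h1 w
      simpa using this
    have h3 := natDegree_le_of_dvd (minpoly.dvd _ _ h2) hq0
    rw [hq, natDegree_X_mul hq0] at h3
    omega
  obtain ⟨a, D, hD, hs, hd⟩ := bd_poly _ h0 hX
  refine ⟨a, D, hD, hs.trans ?_, ?_⟩
  · have h1 := natDegree_le_of_dvd (LinearMap.minpoly_dvd_charpoly g)
      (LinearMap.charpoly_monic g).ne_zero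
    rwa [LinearMap.charpoly_natDegree] at h1
  · have h1 : aeval g (X ^ (2 ^ a * D.lcm (fun n => 2 ^ n - 1)) - 1 : (ZMod 2)[X]) = 0 := by
      obtain ⟨q, hq⟩ := hd
      rw [hq, map_mul, minpoly.aeval, zero_mul]
    simpa [sub_eq_zero] using h1

lemma bd_lcm {ι : Type*} [DecidableEq ι] (f : ι → ℕ) (T : Finset ι) (hf : ∀ t ∈ T, 2 ≤ f t) :
    ∃ B ⊆ T, (∀ x ∈ T \ B, ∀ y ∈ T \ B, x ≠ y → Nat.Coprime (f x) (f y)) ∧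
      T.lcm (fun t => 2 ^ f t - 1) * 2 ^ B.card ≤ 2 ^ ∑ t ∈ T, f t := by
  induction T using Finset.induction_on with
  | empty => exact ⟨∅, by simp, by simp, by simp⟩
  | insert x T hx ih =>
    obtain ⟨B, hBT, hB, hl⟩ := ih (fun t ht => hf t (Finset.mem_insert_of_mem ht))
    have hxB : x ∉ B := fun h => hx (hBT h)
    rw [Finset.lcm_insert, Finset.sum_insert hx, pow_add]
    set L := T.lcm (fun t => 2 ^ f t - 1)
    have hgl := Nat.gcd_mul_lcm (2 ^ f x - 1) L
    have hlcm : GCDMonoid.lcm (2 ^ f x - 1) L = Nat.lcm (2 ^ f x - 1) L := rfl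
    rw [hlcm]
    have hx2 : 2 ≤ f x := hf x (Finset.mem_insert_self _ _)
    have hpos : 0 < 2 ^ f x - 1 := by
      have : 2 ^ 1 < 2 ^ f x := Nat.pow_lt_pow_right (by norm_num) (by omega)
      omega
    have hle : 2 ^ f x - 1 ≤ 2 ^ f x := Nat.sub_le _ _
    have hgpos : 0 < Nat.gcd (2 ^ f x - 1) L := Nat.gcd_pos_of_pos_left _ hpos
    by_cases hc : ∃ y ∈ T, ¬ Nat.Coprime (f x) (f y)
    · obtain ⟨y, hy, hxy⟩ := hc
      refine ⟨insert x B, Finset.insert_subset_insert _ hBT, ?_, ?_⟩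
      · have : insert x T \ insert x B ⊆ T \ B := by
          intro z; simp only [Finset.mem_sdiff, Finset.mem_insert]; tauto
        intro u hu v hv
        exact hB u (this hu) v (this hv)
      · rw [Finset.card_insert_of_notMem hxB, pow_succ]
        have hg2 : 2 ≤ Nat.gcd (f x) (f y) := by
          have : 0 < Nat.gcd (f x) (f y) := Nat.gcd_pos_of_pos_left _ (by omega)
          have : Nat.gcd (f x) (f y) ≠ 1 := hxy
          omega
        have hd : 2 ^ Nat.gcd (f x) (f y) - 1 ∣ Nat.gcd (2 ^ f x - 1) L := by
          apply Nat.dvd_gcd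
          · exact Nat.pow_sub_one_dvd_pow_sub_one _ (Nat.gcd_dvd_left _ _)
          · exact (Nat.pow_sub_one_dvd_pow_sub_one _ (Nat.gcd_dvd_right _ _)).trans
              (Finset.dvd_lcm (f := fun t => 2 ^ f t - 1) hy)
        have h3 := Nat.le_of_dvd hgpos hd
        have h4 : 2 ^ 2 ≤ 2 ^ Nat.gcd (f x) (f y) := Nat.pow_le_pow_right (by norm_num) hg2
        have h5 : 2 ≤ Nat.gcd (2 ^ f x - 1) L := by omega
        calc Nat.lcm (2 ^ f x - 1) L * (2 ^ B.card * 2)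
            = 2 * Nat.lcm (2 ^ f x - 1) L * 2 ^ B.card := by ring
          _ ≤ Nat.gcd (2 ^ f x - 1) L * Nat.lcm (2 ^ f x - 1) L * 2 ^ B.card := by gcongr
          _ = (2 ^ f x - 1) * (L * 2 ^ B.card) := by rw [hgl]; ring
          _ ≤ _ := Nat.mul_le_mul hle hl
    · push Not at hc
      refine ⟨B, hBT.trans (Finset.subset_insert _ _), ?_, ?_⟩
      · intro u hu v hv huv
        simp only [Finset.mem_sdiff, Finset.mem_insert] at hu hv
        rcases hu with ⟨rfl | hu, hu'⟩ <;> rcases hv with ⟨rfl | hv, hv'⟩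
        · exact absurd rfl huv
        · exact hc v hv
        · exact (hc u hu).symm
        · exact hB u (by simp [hu, hu']) v (by simp [hv, hv']) huv
      · calc Nat.lcm (2 ^ f x - 1) L * 2 ^ B.card
            ≤ Nat.gcd (2 ^ f x - 1) L * Nat.lcm (2 ^ f x - 1) L * 2 ^ B.card := by
              gcongr; exact Nat.le_mul_of_pos_left _ hgpos
          _ = (2 ^ f x - 1) * (L * 2 ^ B.card) := by rw [hgl]; ring
          _ ≤ _ := Nat.mul_le_mul hle hl

lemma bd_comb (m r A : ℕ) (hm : 3 ≤ m) (a : Fin r → ℕ) (D : Fin r → Finset ℕ)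
    (h2 : ∀ i, ∀ n ∈ D i, 2 ≤ n) (hs : ∀ i, a i + ∑ n ∈ D i, n ≤ m)
    (i₀ : Fin r) (hA : A = a i₀) (hmr : 3 ≤ m * r)
    (hN : 2 ^ (m * r - 3) ≤ 2 ^ A * (Finset.univ.sigma D).lcm
      (fun t : (Σ _ : Fin r, ℕ) => 2 ^ t.2 - 1)) :
    2 * r ≤ Nat.primeCounting m + 9 := by
  classical
  set T : Finset (Σ _ : Fin r, ℕ) := Finset.univ.sigma D with hT
  have hmemT : ∀ t : (Σ _ : Fin r, ℕ), t ∈ T ↔ t.2 ∈ D t.1 := by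
    intro t; simp [hT]
  obtain ⟨B, hBT, hB, hl⟩ := bd_lcm (fun t : (Σ _ : Fin r, ℕ) => t.2) T
    (fun t ht => h2 t.1 t.2 ((hmemT t).1 ht))
  have hsum : ∑ t ∈ T, t.2 = ∑ i, ∑ n ∈ D i, n := by
    rw [hT, Finset.sum_sigma]
  have hcard : T.card = ∑ i, (D i).card := by rw [hT, Finset.card_sigma]
  have hexp : m * r - 3 + B.card ≤ A + ∑ t ∈ T, t.2 := by
    apply (Nat.pow_le_pow_iff_right (a := 2) (by norm_num)).1
    rw [pow_add, pow_add]
    calc _ ≤ _ := Nat.mul_le_mul_right _ hN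
      _ = 2 ^ A * (_ * 2 ^ B.card) := by rw [mul_assoc]
      _ ≤ _ := Nat.mul_le_mul_left _ hl
  have hle : ∀ t ∈ T, t.2 ≤ m := by
    intro t ht
    have h := Finset.single_le_sum (f := fun n => n) (fun _ _ => Nat.zero_le _) ((hmemT t).1 ht)
    have := hs t.1
    omega
  have hpi : (T \ B).card ≤ Nat.primeCounting m := by
    rw [← Nat.primesLE_card_eq_primeCounting]
    apply Finset.card_le_card_of_injOn (fun t => t.2.minFac)
    · intro t ht
      have ht' : t ∈ T := (Finset.mem_sdiff.1 ht).1
      have := h2 t.1 t.2 ((hmemT t).1 ht')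
      exact Nat.mem_primesLE.2 ⟨(Nat.minFac_le (by omega)).trans (hle t ht'),
        Nat.minFac_prime (by omega)⟩
    · intro t ht u hu htu
      by_contra hne
      have hco := hB t ht u hu hne
      have ht' : t ∈ T := (Finset.mem_sdiff.1 ht).1
      have := h2 t.1 t.2 ((hmemT t).1 ht')
      have htu' : t.2.minFac = u.2.minFac := htu
      have hp := Nat.minFac_prime (n := t.2) (by omega)
      exact Nat.not_coprime_of_dvd_of_dvd hp.one_lt (Nat.minFac_dvd _)
        (htu' ▸ Nat.minFac_dvd _) hco
  have hsd : (T \ B).card + B.card = T.card := Finset.card_sdiff_add_card_eq_card hBT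
  -- blocks which are a single factor of full degree
  set K : Finset (Fin r) := Finset.univ.filter (fun i => D i = {m}) with hK
  have hKB : K.card ≤ B.card + 1 := by
    have hinj : Function.Injective (fun i : Fin r => (⟨i, m⟩ : Σ _ : Fin r, ℕ)) := by
      intro i j hij
      simpa using hij
    set K' := K.image (fun i : Fin r => (⟨i, m⟩ : Σ _ : Fin r, ℕ)) with hK'
    have h1 : K'.card = K.card := Finset.card_image_of_injective _ hinj
    have hKT : ∀ t ∈ K', t ∈ T ∧ t.2 = m := by
      intro t ht
      simp only [hK', hK, Finset.mem_image, Finset.mem_filter, Finset.mem_univ, true_and] at ht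
      obtain ⟨i, hi, rfl⟩ := ht
      exact ⟨(hmemT _).2 (by simp [hi]), rfl⟩
    have h3 : (K' \ B).card ≤ 1 := by
      rw [Finset.card_le_one]
      intro t ht u hu
      by_contra hne
      rw [Finset.mem_sdiff] at ht hu
      have hco := hB t (Finset.mem_sdiff.2 ⟨(hKT t ht.1).1, ht.2⟩) u
        (Finset.mem_sdiff.2 ⟨(hKT u hu.1).1, hu.2⟩) hne
      simp only [(hKT t ht.1).2, (hKT u hu.1).2, Nat.coprime_self] at hco
      omega
    have h4 := Finset.card_le_card_sdiff_add_card (s := K') (t := B)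
    omega
  have hblock : ∀ i, 2 + ∑ n ∈ D i, n + (if i = i₀ then A else 0) ≤
      (D i).card + m + (if D i = {m} then 1 else 0) + (if i = i₀ then 2 else 0) := by
    intro i
    have hi := hs i
    by_cases h : i = i₀
    · subst h
      simp only [if_true]
      omega
    · simp only [h, if_false]
      rcases Nat.lt_or_ge (D i).card 2 with hc | hc
      · rcases Nat.lt_or_ge (D i).card 1 with hc' | hc'
        · have : D i = ∅ := Finset.card_eq_zero.1 (by omega)
          rw [this]; simp; omega
        · obtain ⟨n, hn⟩ := Finset.card_eq_one.1 (show (D i).card = 1 by omega)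
          rw [hn] at hi ⊢
          simp only [Finset.sum_singleton, Finset.card_singleton, Finset.singleton_inj] at hi ⊢
          split_ifs <;> omega
      · omega
  have htot := Finset.sum_le_sum (s := Finset.univ) (fun i _ => hblock i)
  have hKc : ∑ i, (if D i = {m} then 1 else 0) = K.card := by
    rw [hK, Finset.card_filter]
  simp only [Finset.sum_add_distrib, Finset.sum_ite_eq', Finset.mem_univ, if_true,
    Finset.sum_const, Finset.card_univ, Fintype.card_fin, smul_eq_mul, hKc] at htot
  have hup : A + ∑ i, ∑ n ∈ D i, n ≤ m * r := by
    have : ∀ i, (if i = i₀ then A else 0) + ∑ n ∈ D i, n ≤ m := by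
      intro i
      have hi := hs i
      split_ifs with h
      · subst h; omega
      · omega
    have := Finset.sum_le_sum (s := Finset.univ) (fun i _ => this i)
    simp only [Finset.sum_add_distrib, Finset.sum_ite_eq', Finset.mem_univ, if_true,
      Finset.sum_const, Finset.card_univ, Fintype.card_fin, smul_eq_mul] at this
    rw [mul_comm m r]
    exact this
  rw [mul_comm r m] at htot
  omega

/-- Remark 2 bound: Let `d = m * r` with `m ≥ 3`, `r ≥ 1`, and let `h` be
a block-diagonal linear automorphism of a `d`-dimensional `𝔽₂`-space preserving each
summand of an internal direct sum decomposition `V = V₁ ⊕ ⋯ ⊕ V_r` into subspaces of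
dimension `m`.  If `orderOf h ≥ 2 ^ (d - 3)`, then `2 * (r - 5) ≤ π(m)`, the number of
primes at most `m`. -/
theorem block_diagonal_order_prime_counting (m r d : ℕ) (hm : 3 ≤ m) (hr : 1 ≤ r)
    (hd : d = m * r)
    (V : Type*) [AddCommGroup V] [Module (ZMod 2) V] [Module.Finite (ZMod 2) V]
    (hdim : Module.finrank (ZMod 2) V = d)
    (Vs : Fin r → Submodule (ZMod 2) V) (hint : DirectSum.IsInternal Vs)
    (hdims : ∀ i, Module.finrank (ZMod 2) (Vs i) = m)
    (h : V ≃ₗ[ZMod 2] V) (hinv : ∀ i, ∀ x ∈ Vs i, h x ∈ Vs i)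
    (hord : 2 ^ (d - 3) ≤ orderOf h) :
    2 * (r - 5) ≤ Nat.primeCounting m := by
  rcases Nat.lt_or_ge r 6 with hr6 | hr6
  · have : r - 5 = 0 := by omega
    simp [this]
  subst hd
  have hmr : 3 ≤ m * r := by nlinarith
  have key : ∀ i, ∃ (a : ℕ) (D : Finset ℕ), (∀ n ∈ D, 2 ≤ n) ∧ a + ∑ n ∈ D, n ≤ m ∧
      ∀ x ∈ Vs i, (h ^ (2 ^ a * D.lcm (fun n => 2 ^ n - 1))) x = x := by
    intro i
    set g : Module.End (ZMod 2) (Vs i) := (h : V →ₗ[ZMod 2] V).restrict (hinv i) with hg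
    have hpow : ∀ (N : ℕ) (x : Vs i), ((g ^ N) x : V) = (h ^ N) x := by
      intro N
      induction N with
      | zero => intro x; simp
      | succ N ih =>
        intro x
        rw [pow_succ, pow_succ, Module.End.mul_apply, ih]
        rfl
    have hinj : Function.Injective g := by
      intro x y hxy
      apply Subtype.ext
      apply h.injective
      exact congrArg Subtype.val hxy
    obtain ⟨a, D, hD, hs, hp⟩ := bd_end g hinj
    refine ⟨a, D, hD, (hdims i) ▸ hs, ?_⟩
    intro x hx
    have := hpow (2 ^ a * D.lcm (fun n => 2 ^ n - 1)) ⟨x, hx⟩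
    rw [hp] at this
    exact this.symm
  choose a D hD hs hp using key
  haveI : Nonempty (Fin r) := ⟨⟨0, by omega⟩⟩
  obtain ⟨i₀, hi₀⟩ := Finite.exists_max a
  set N := 2 ^ a i₀ * (Finset.univ.sigma D).lcm
      (fun t : (Σ _ : Fin r, ℕ) => 2 ^ t.2 - 1) with hNdef
  have hlcmpos : (Finset.univ.sigma D).lcm
      (fun t : (Σ _ : Fin r, ℕ) => 2 ^ t.2 - 1) ≠ 0 := by
    rw [Ne, Finset.lcm_eq_zero_iff]
    rintro ⟨t, ht, h0⟩
    have h2 := hD t.1 t.2 (by simpa using ht)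
    have : 2 ^ 1 < 2 ^ t.2 := Nat.pow_lt_pow_right (by norm_num) (by omega)
    omega
  have hNpos : 0 < N := Nat.pos_of_ne_zero (mul_ne_zero (by positivity) hlcmpos)
  have hfix : ∀ i, ∀ x ∈ Vs i, (h ^ N) x = x := by
    intro i x hx
    have hdvd : 2 ^ a i * (D i).lcm (fun n => 2 ^ n - 1) ∣ N := by
      apply mul_dvd_mul (pow_dvd_pow _ (hi₀ i))
      apply Finset.lcm_dvd
      intro n hn
      exact Finset.dvd_lcm (s := Finset.univ.sigma D)
        (f := fun t : (Σ _ : Fin r, ℕ) => 2 ^ t.2 - 1) (b := ⟨i, n⟩) (by simpa using hn)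
    obtain ⟨k, hk⟩ := hdvd
    rw [hk, pow_mul]
    have hx1 := hp i x hx
    generalize h ^ (2 ^ a i * (D i).lcm (fun n => 2 ^ n - 1)) = u at hx1
    clear hk
    induction k with
    | zero => simp
    | succ k ih => rw [pow_succ, LinearEquiv.mul_apply, hx1, ih]
  have hone : h ^ N = 1 := by
    ext x
    have hx : x ∈ (⨆ i, Vs i) := by
      rw [hint.submodule_iSup_eq_top]; trivial
    induction hx using Submodule.iSup_induction' with
    | mem i x hx => exact hfix i x hx
    | zero => simp
    | add x y _ _ hx hy => rw [map_add, map_add, hx, hy]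
  have hord' : orderOf h ≤ N := Nat.le_of_dvd hNpos (orderOf_dvd_of_pow_eq_one hone)
  have := bd_comb m r (a i₀) hm a D hD hs i₀ rfl hmr (hord.trans hord')
  omega
end
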